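/- Let G be a Δ-regular graph with 3 ≤ Δ and n ≥ Δ+2 vertices, G connected, admitting a frozen (Δ+1)-colouring. Then the proportion of frozen colourings among all proper (Δ+1)-colourings of G is at most (6/7)^{n/(Δ+1)}. -/

import Mathlib

/-!
Fix an involution `σ` of the colours. In a frozen colouring `α`, the edges whose ends have
`σ`-paired colours form a matching, and exchanging the colours on any `r` of them keeps the
colouring proper; so `α` lies in a class of at least `2 ^ r` proper colourings, `r` being the number
of these edges. The exchange can only stay frozen if it treats many of these edges alike: if `x` is
adjacent to exactly one end `v` of the edge `uv`, then the vertex `y` of `N[x]` with the colour of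
`u` lies on another such edge, and a frozen colouring must tell `v` from `y` because both lie in
`N[x]`. Hence, if `t` of the edges join vertices with different closed neighbourhoods, then a class
contains at most `2 ^ (r - t / 2)` frozen colourings.

Put an abelian group structure on the colours and let `σ` run over the involutions `x ↦ c - x`: each
edge is `σ`-paired for exactly one `c`. As no closed neighbourhood is a clique, every vertex lies on
two edges whose ends have different closed neighbourhoods, so the values `t` add up to at least the
number of vertices. Convexity of `t ↦ 2 ^ (t / 2)` combines the estimates for the different `c`.
-/

open Finset

section Counting

variable {ι X Y Z : Type*}

theorem card_mul_rpow_sum_div_card_le_sum_rpow [Fintype ι] {b : ℝ} (hb : 0 < b) (f : ι → ℝ) :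
    Fintype.card ι * b ^ ((∑ i, f i) / Fintype.card ι) ≤ ∑ i, b ^ f i := by
  rcases isEmpty_or_nonempty ι with _ | _
  · simp
  have hcard : (0 : ℝ) < Fintype.card ι := by exact_mod_cast Fintype.card_pos
  have jensen := (convexOn_rpow_left hb).map_sum_le (t := univ)
    (w := fun _ : ι ↦ (Fintype.card ι : ℝ)⁻¹) (p := f) (fun _ _ ↦ by positivity)
    (by simp [hcard.ne']) (fun _ _ ↦ Set.mem_univ _)
  simp only [smul_eq_mul, ← mul_sum] at jensen
  rwa [div_eq_inv_mul, ← le_inv_mul_iff₀ hcard]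

theorem sum_le_card_of_forall_mul_card_fiber_le [DecidableEq Y] {A B : Finset X} (f : X → Y)
    (w : X → ℝ)
    (hw : ∀ a ∈ A, w a * #{x ∈ A | f x = f a} ≤ #{x ∈ B | f x = f a}) :
    ∑ a ∈ A, w a ≤ #B := by
  classical
  have hA (x) (hx : x ∈ A) : f x ∈ (A ∪ B).image f := mem_image_of_mem f (mem_union_left B hx)
  have hB (x) (hx : x ∈ B) : f x ∈ (A ∪ B).image f := mem_image_of_mem f (mem_union_right A hx)
  have fiber_le (y : Y) : ∑ a ∈ A with f a = y, w a ≤ #{x ∈ B | f x = y} := by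
    rcases eq_empty_or_nonempty {a ∈ A | f a = y} with hempty | hne
    · simp [hempty]
    have hpos : (0 : ℝ) < #{a ∈ A | f a = y} := by exact_mod_cast hne.card_pos
    calc ∑ a ∈ A with f a = y, w a
        ≤ #{a ∈ A | f a = y} • (#{x ∈ B | f x = y} / #{a ∈ A | f a = y} : ℝ) := by
          refine sum_le_card_nsmul _ _ _ fun a ha ↦ ?_
          obtain ⟨haA, rfl⟩ := mem_filter.1 ha
          exact (le_div_iff₀ hpos).2 (hw a haA)
      _ = #{x ∈ B | f x = y} := by rw [nsmul_eq_mul, mul_div_cancel₀ _ hpos.ne']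
  calc ∑ a ∈ A, w a = ∑ y ∈ (A ∪ B).image f, ∑ a ∈ A with f a = y, w a :=
        (sum_fiberwise_of_maps_to hA w).symm
    _ ≤ ∑ y ∈ (A ∪ B).image f, (#{x ∈ B | f x = y} : ℝ) := sum_le_sum fun y _ ↦ fiber_le y
    _ = #B := by exact_mod_cast (card_eq_sum_card_fiberwise hB).symm

theorem two_mul_card_image_add_card_le [DecidableEq Z] {E T : Finset Y} (k : Y → Z) (hTE : T ⊆ E)
    (hT : ∀ e ∈ T, ∃ e' ∈ E, e' ≠ e ∧ k e' = k e) :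
    2 * #(E.image k) + #T ≤ 2 * #E := by
  have fiber_le (z) (hz : z ∈ E.image k) : 2 + #{e ∈ T | k e = z} ≤ 2 * #{e ∈ E | k e = z} := by
    have hsub : #{e ∈ T | k e = z} ≤ #{e ∈ E | k e = z} := card_le_card (filter_subset_filter _ hTE)
    rcases eq_empty_or_nonempty {e ∈ T | k e = z} with hempty | ⟨e, he⟩
    · obtain ⟨e, he, rfl⟩ := mem_image.1 hz
      have : 0 < #{e' ∈ E | k e' = k e} := card_pos.2 ⟨e, by simp [he]⟩
      rw [hempty, card_empty]
      lia
    · obtain ⟨heT, rfl⟩ := mem_filter.1 he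
      obtain ⟨e', he', hne, hk⟩ := hT e heT
      have : 1 < #{e' ∈ E | k e' = k e} :=
        one_lt_card.2 ⟨e', by simp [he', hk], e, by simp [hTE heT], hne⟩
      lia
  calc 2 * #(E.image k) + #T = ∑ z ∈ E.image k, (2 + #{e ∈ T | k e = z}) := by
        rw [sum_add_distrib, sum_const, smul_eq_mul, mul_comm,
          card_eq_sum_card_fiberwise fun e he ↦ mem_image_of_mem k (hTE he)]
    _ ≤ ∑ z ∈ E.image k, 2 * #{e ∈ E | k e = z} := sum_le_sum fiber_le
    _ = 2 * #E := by rw [← mul_sum, ← card_eq_sum_card_image]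

theorem card_le_two_pow_card_image_of_injOn [DecidableEq X] {A : Finset X} {E : Finset Y}
    (r : X → Y → Prop) [∀ x, DecidablePred (r x)] (hr : Set.InjOn (fun x ↦ {e ∈ E | r x e}) A) :
    #A ≤ 2 ^ #(E.image fun e ↦ {x ∈ A | r x e}) := by
  set k : Y → Finset X := fun e ↦ {x ∈ A | r x e} with hk
  rw [← card_powerset]
  refine card_le_card_of_injOn (fun x ↦ {z ∈ E.image k | x ∈ z})
    (fun x _ ↦ mem_powerset.2 (filter_subset _ _)) fun x hx y hy hxy ↦ hr hx hy ?_
  refine filter_congr fun e he ↦ ?_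
  have hmem := Finset.ext_iff.1 hxy (k e)
  rw [mem_coe] at hx hy
  simp only [mem_filter, mem_image_of_mem k he, true_and] at hmem
  simpa only [hk, mem_filter, hx, hy, true_and] using hmem

theorem two_rpow_half_card_mul_card_le {A : Finset X} {E T : Finset Y} (r : X → Y → Prop)
    [∀ x, DecidablePred (r x)] (hTE : T ⊆ E) (hr : Set.InjOn (fun x ↦ {e ∈ E | r x e}) A)
    (hT : ∀ e ∈ T, ∃ e' ∈ E, e' ≠ e ∧ ∀ x ∈ A, r x e' ↔ r x e) :
    (2 : ℝ) ^ (#T / 2 : ℝ) * #A ≤ 2 ^ #E := by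
  classical
  set q := #(E.image fun e ↦ {x ∈ A | r x e})
  have hA : (#A : ℝ) ≤ 2 ^ q := by exact_mod_cast card_le_two_pow_card_image_of_injOn r hr
  have hq : 2 * (q : ℝ) + #T ≤ 2 * #E := by
    exact_mod_cast two_mul_card_image_add_card_le _ hTE fun e he ↦
      (hT e he).imp fun e' ⟨he', hne, h⟩ ↦ ⟨he', hne, filter_congr h⟩
  calc (2 : ℝ) ^ (#T / 2 : ℝ) * #A ≤ 2 ^ (#T / 2 : ℝ) * 2 ^ q := by gcongr
    _ = 2 ^ (#T / 2 + q : ℝ) := by rw [Real.rpow_add two_pos, Real.rpow_natCast]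
    _ ≤ 2 ^ (#E : ℝ) := Real.rpow_le_rpow_of_exponent_le one_le_two (by linarith)
    _ = 2 ^ #E := Real.rpow_natCast _ _

end Counting

section Colorings

variable {V C : Type*} {G : SimpleGraph V} {u v : V}

/-- The closed neighbourhood `N[v]` of a vertex: `v` together with its neighbours. -/
def closedNeighborSet (G : SimpleGraph V) (v : V) : Set V := insert v (G.neighborSet v)

theorem mem_closedNeighborSet_comm : u ∈ closedNeighborSet G v ↔ v ∈ closedNeighborSet G u := by
  simp [closedNeighborSet, eq_comm, G.adj_comm]

theorem mem_closedNeighborSet_of_adj (h : G.Adj v u) : u ∈ closedNeighborSet G v := Or.inr h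

/-- A colouring is frozen if every closed neighbourhood sees every colour, so that no vertex can be
recoloured on its own. -/
def IsFrozen (α : G.Coloring C) : Prop := ∀ v c, ∃ u ∈ closedNeighborSet G v, α u = c

/-- The subgraph of edges whose ends have different closed neighbourhoods, that is, whose ends are
not adjacent twins. -/
def nonTwinGraph (G : SimpleGraph V) : SimpleGraph V where
  Adj u v := G.Adj u v ∧ closedNeighborSet G u ≠ closedNeighborSet G v
  symm := ⟨fun _ _ h ↦ ⟨h.1.symm, h.2.symm⟩⟩
  loopless := ⟨fun _ h ↦ G.loopless.irrefl _ h.1⟩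

theorem nonTwinGraph_le : nonTwinGraph G ≤ G := fun _ _ h ↦ h.1

theorem exists_eq_mk_of_mem_edgeSet_nonTwinGraph {e : Sym2 V} (he : e ∈ (nonTwinGraph G).edgeSet) :
    ∃ u v x, e = s(u, v) ∧ x ∈ closedNeighborSet G v ∧ x ∉ closedNeighborSet G u := by
  induction e with | _ u v
  obtain ⟨-, hne⟩ := (nonTwinGraph G).mem_edgeSet.1 he
  obtain ⟨x, ⟨hx, hx'⟩ | ⟨hx, hx'⟩⟩ := Set.symmDiff_nonempty.2 hne
  · exact ⟨v, u, x, Sym2.eq_swap, hx, hx'⟩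
  · exact ⟨u, v, x, rfl, hx, hx'⟩

section Degree

variable [Fintype C] {α : G.Coloring C}

theorem IsFrozen.card_le_degree_add_one (hα : IsFrozen α) (v : V) [Fintype (G.neighborSet v)] :
    Fintype.card C ≤ G.degree v + 1 := by
  classical
  calc Fintype.card C ≤ #(insert v (G.neighborFinset v)) :=
        card_le_card_of_surjOn α fun c _ ↦ by
          simpa [closedNeighborSet] using hα v c
    _ = G.degree v + 1 := by
        rw [card_insert_of_notMem (by simp), G.card_neighborFinset_eq_degree]

theorem IsFrozen.injOn [Fintype (G.neighborSet v)] (hα : IsFrozen α)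
    (hv : G.degree v < Fintype.card C) : Set.InjOn α (closedNeighborSet G v) := by
  classical
  have hinj := injOn_of_surjOn_of_card_le (s := insert v (G.neighborFinset v)) (t := univ) α
    (fun _ _ ↦ by simp) (fun c _ ↦ by simpa [closedNeighborSet] using hα v c)
    (by rwa [card_insert_of_notMem (by simp), G.card_neighborFinset_eq_degree, card_univ])
  simpa [closedNeighborSet] using hinj

theorem IsFrozen.two_le_degree_nonTwinGraph [Fintype (G.neighborSet v)]
    [Fintype ((nonTwinGraph G).neighborSet v)] (hα : IsFrozen α)
    (hv : G.degree v < Fintype.card C) (hG : G.CliqueFree (Fintype.card C)) :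
    2 ≤ (nonTwinGraph G).degree v := by
  classical
  have hcard : #(insert v (G.neighborFinset v)) = Fintype.card C := by
    rw [card_insert_of_notMem (by simp), G.card_neighborFinset_eq_degree]
    exact le_antisymm hv (hα.card_le_degree_add_one v)
  obtain ⟨a, ha, b, hb, hne, hab⟩ :
      ∃ a, G.Adj v a ∧ ∃ b, G.Adj v b ∧ a ≠ b ∧ ¬ G.Adj a b := by
    by_contra! hclique
    refine hG _ (G.isNClique_iff.2 ⟨?_, hcard⟩)
    rw [coe_insert, G.coe_neighborFinset]
    exact SimpleGraph.IsClique.insert (fun a ha b hb ↦ hclique a ha b hb) fun _ hb _ ↦ hb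
  have nonTwin {a b : V} (ha : G.Adj v a) (hb : G.Adj v b) (hne : a ≠ b) (hab : ¬ G.Adj a b) :
      (nonTwinGraph G).Adj v a := by
    refine ⟨ha, fun h ↦ ?_⟩
    rcases h ▸ mem_closedNeighborSet_of_adj hb with hba | hba
    · exact hne hba.symm
    · exact hab hba
  rw [← SimpleGraph.card_neighborFinset_eq_degree, Nat.succ_le_iff, one_lt_card]
  exact ⟨a, by simpa using nonTwin ha hb hne hab, b,
    by simpa using nonTwin hb ha hne.symm (mt SimpleGraph.Adj.symm hab), hne⟩

theorem IsFrozen.card_le_card_edgeFinset_nonTwinGraph [Fintype V] [DecidableRel G.Adj]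
    [DecidableRel (nonTwinGraph G).Adj] (hα : IsFrozen α)
    (hdeg : ∀ v, G.degree v < Fintype.card C) (hG : G.CliqueFree (Fintype.card C)) :
    Fintype.card V ≤ #(nonTwinGraph G).edgeFinset := by
  refine Nat.le_of_mul_le_mul_left ?_ two_pos
  calc 2 * Fintype.card V = ∑ _v : V, 2 := by simp [mul_comm]
    _ ≤ ∑ v, (nonTwinGraph G).degree v :=
      sum_le_sum fun v _ ↦ hα.two_le_degree_nonTwinGraph (hdeg v) hG
    _ = 2 * #(nonTwinGraph G).edgeFinset := SimpleGraph.sum_degrees_eq_twice_card_edges _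

end Degree

section Kempe

variable {σ : C → C}

/-- The unordered pair `{α v, σ (α v)}` at each vertex. For an involution `σ`, two colourings have
the same colour pairs iff they differ by exchanging `σ`-paired colours at some of the vertices. -/
def colorPair (σ : C → C) (α : V → C) (v : V) : Sym2 C := s(α v, σ (α v))

theorem colorPair_eq_iff (hσ : Function.Involutive σ) {α β : V → C} :
    colorPair σ β = colorPair σ α ↔ ∀ v, β v = α v ∨ β v = σ (α v) := by
  refine funext_iff.trans (forall_congr' fun v ↦ ?_)
  simp only [colorPair, Sym2.eq_iff]
  grind [hσ (α v)]

/-- The edge `e` has an end at which `β` differs from `α`. -/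
def Recolors (α β : V → C) (e : Sym2 V) : Prop := ∃ v ∈ e, β v ≠ α v

theorem eq_iff_eq_of_colorPair_eq (hσ : Function.Involutive σ) {α β : V → C}
    (hβ : colorPair σ β = colorPair σ α) (huv : α v = σ (α u)) (hne : β u ≠ β v) :
    β u = α u ↔ β v = α v := by
  have hu := (colorPair_eq_iff hσ).1 hβ u
  have hv := (colorPair_eq_iff hσ).1 hβ v
  rw [huv, hσ] at hv
  grind

theorem recolors_mk_iff (hσ : Function.Involutive σ) {α β : V → C}
    (hβ : colorPair σ β = colorPair σ α) (huv : α v = σ (α u)) (hne : β u ≠ β v) :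
    Recolors α β s(u, v) ↔ β u ≠ α u := by
  simp [Recolors, ← eq_iff_eq_of_colorPair_eq hσ hβ huv hne]

open Classical in
/-- The result of exchanging the `σ`-paired colours on the edges of `D`. -/
noncomputable def kempeSwap (σ : C → C) (α : V → C) (D : Finset (Sym2 V)) (v : V) : C :=
  if ∃ e ∈ D, v ∈ e then σ (α v) else α v

theorem colorPair_kempeSwap (hσ : Function.Involutive σ) (α : V → C) (D : Finset (Sym2 V)) :
    colorPair σ (kempeSwap σ α D) = colorPair σ α := by
  refine (colorPair_eq_iff hσ).2 fun v ↦ ?_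
  unfold kempeSwap
  split_ifs
  · exact Or.inr rfl
  · exact Or.inl rfl

variable [Fintype V]

open Classical in
/-- The edges of `H` whose ends have `σ`-paired colours. In a frozen colouring of `G` these edges,
for `H = G`, are the bichromatic Kempe chains. -/
noncomputable def kempeEdges (H : SimpleGraph V) (σ : C → C) (α : V → C) : Finset (Sym2 V) :=
  {e | e ∈ H.edgeSet ∧ ∃ c, e.map α = s(c, σ c)}

theorem mem_kempeEdges {H : SimpleGraph V} {α : V → C} {e : Sym2 V} :
    e ∈ kempeEdges H σ α ↔ e ∈ H.edgeSet ∧ ∃ c, e.map α = s(c, σ c) := by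
  simp only [kempeEdges, mem_filter_univ]

theorem mk_mem_kempeEdges (hσ : Function.Involutive σ) {H : SimpleGraph V} {α : V → C} :
    s(u, v) ∈ kempeEdges H σ α ↔ H.Adj u v ∧ α v = σ (α u) := by
  simp only [mem_kempeEdges, SimpleGraph.mem_edgeSet, Sym2.map_mk, Sym2.eq_iff]
  grind [hσ (α v)]

theorem kempeEdges_mono {H H' : SimpleGraph V} (h : H ≤ H') (α : V → C) :
    kempeEdges H σ α ⊆ kempeEdges H' σ α := fun _ he ↦
  mem_kempeEdges.2 ((mem_kempeEdges.1 he).imp_left (SimpleGraph.edgeSet_mono h ·))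

theorem IsFrozen.exists_mk_mem_kempeEdges (hσ : Function.Involutive σ) {α : G.Coloring C}
    (hα : IsFrozen α) (hv : σ (α v) ≠ α v) : ∃ u, s(v, u) ∈ kempeEdges G σ α := by
  obtain ⟨u, rfl | hadj, hu⟩ := hα v (σ (α v))
  · exact absurd hu.symm hv
  · exact ⟨u, (mk_mem_kempeEdges hσ).2 ⟨hadj, hu⟩⟩

theorem IsFrozen.injOn_recolors (hσ : Function.Involutive σ) {α : G.Coloring C} (hα : IsFrozen α)
    [∀ β : G.Coloring C, DecidablePred (Recolors α β)] :
    Set.InjOn (fun β : G.Coloring C ↦ {e ∈ kempeEdges G σ α | Recolors α β e})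
      {β | colorPair σ β = colorPair σ α} := by
  intro β hβ γ hγ hβγ
  refine DFunLike.ext _ _ fun v ↦ ?_
  have hβv := (colorPair_eq_iff hσ).1 hβ v
  have hγv := (colorPair_eq_iff hσ).1 hγ v
  by_cases hv : σ (α v) = α v
  · grind
  · obtain ⟨u, hu⟩ := hα.exists_mk_mem_kempeEdges hσ hv
    have hmem := Finset.ext_iff.1 hβγ s(v, u)
    obtain ⟨hadj, huv⟩ := (mk_mem_kempeEdges hσ).1 hu
    simp only [mem_filter, hu, true_and, recolors_mk_iff hσ hβ huv (β.valid hadj),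
      recolors_mk_iff hσ hγ huv (γ.valid hadj)] at hmem
    grind

section Swap

variable [DecidableRel G.Adj] [Fintype C] {α : G.Coloring C} {D : Finset (Sym2 V)}

theorem IsFrozen.exists_mem_iff_mk_mem (hσ : Function.Involutive σ) (hα : IsFrozen α)
    (hdeg : G.degree v < Fintype.card C) (hD : D ⊆ kempeEdges G σ α)
    (h : s(v, u) ∈ kempeEdges G σ α) : (∃ e ∈ D, v ∈ e) ↔ s(v, u) ∈ D := by
  refine ⟨?_, fun hmem ↦ ⟨_, hmem, Sym2.mem_mk_left v u⟩⟩
  rintro ⟨e, he, w, rfl⟩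
  obtain ⟨hvw, hw⟩ := (mk_mem_kempeEdges hσ).1 (hD he)
  obtain ⟨hvu, hu⟩ := (mk_mem_kempeEdges hσ).1 h
  have : w = u := hα.injOn hdeg (mem_closedNeighborSet_of_adj hvw)
    (mem_closedNeighborSet_of_adj hvu) (hw.trans hu.symm)
  exact this ▸ he

theorem IsFrozen.kempeSwap_ne (hσ : Function.Involutive σ) (hα : IsFrozen α)
    (hdeg : ∀ v, G.degree v < Fintype.card C) (hD : D ⊆ kempeEdges G σ α) (huv : G.Adj u v) :
    kempeSwap σ α D u ≠ kempeSwap σ α D v := by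
  have hne := α.valid huv
  unfold kempeSwap
  by_cases h : s(u, v) ∈ kempeEdges G σ α
  · have hu := hα.exists_mem_iff_mk_mem hσ (hdeg u) hD h
    have hv := hα.exists_mem_iff_mk_mem hσ (hdeg v) hD (Sym2.eq_swap ▸ h)
    rw [Sym2.eq_swap] at hv
    by_cases hmem : s(u, v) ∈ D
    · rw [if_pos (hu.2 hmem), if_pos (hv.2 hmem)]
      exact hσ.injective.ne hne
    · rw [if_neg (mt hu.1 hmem), if_neg (mt hv.1 hmem)]
      exact hne
  · have hvu : α v ≠ σ (α u) := fun hvu ↦ h ((mk_mem_kempeEdges hσ).2 ⟨huv, hvu⟩)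
    have huv : α u ≠ σ (α v) := fun huv ↦ hvu (by rw [huv, hσ])
    split_ifs
    · exact hσ.injective.ne hne
    · exact hvu.symm
    · exact huv
    · exact hne

theorem IsFrozen.recolors_kempeSwap_iff (hσ : Function.Involutive σ) (hα : IsFrozen α)
    (hdeg : ∀ v, G.degree v < Fintype.card C) (hD : D ⊆ kempeEdges G σ α) {e : Sym2 V}
    (he : e ∈ kempeEdges G σ α) : Recolors α (kempeSwap σ α D) e ↔ e ∈ D := by
  induction e with | _ u v
  obtain ⟨hadj, huv⟩ := (mk_mem_kempeEdges hσ).1 he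
  have hpaired : σ (α u) ≠ α u := huv ▸ (α.valid hadj).symm
  rw [recolors_mk_iff hσ (colorPair_kempeSwap hσ α D) huv (hα.kempeSwap_ne hσ hdeg hD hadj),
    ← hα.exists_mem_iff_mk_mem hσ (hdeg u) hD he]
  simp [kempeSwap, hpaired]

open Classical in
theorem IsFrozen.two_pow_card_kempeEdges_le (hσ : Function.Involutive σ) (hα : IsFrozen α)
    (hdeg : ∀ v, G.degree v < Fintype.card C) :
    2 ^ #(kempeEdges G σ α) ≤ #{β : G.Coloring C | colorPair σ β = colorPair σ α} := by
  rw [← card_powerset]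
  refine card_le_card_of_surjOn (fun β ↦ {e ∈ kempeEdges G σ α | Recolors α β e}) fun D hD ↦ ?_
  rw [mem_coe, mem_powerset] at hD
  refine ⟨.mk (kempeSwap σ α D) (hα.kempeSwap_ne hσ hdeg hD),
    (mem_filter_univ _).2 (colorPair_kempeSwap hσ α D), ?_⟩
  ext e
  rw [mem_filter]
  exact (and_congr_right fun he ↦ hα.recolors_kempeSwap_iff hσ hdeg hD he).trans
    ⟨And.right, fun he ↦ ⟨hD he, he⟩⟩

end Swap

section Bound

variable [DecidableRel G.Adj] [Fintype C] {α : G.Coloring C}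

theorem IsFrozen.exists_recolors_iff (hσ : Function.Involutive σ) (hα : IsFrozen α)
    (hdeg : ∀ v, G.degree v < Fintype.card C) {e : Sym2 V}
    (he : e ∈ kempeEdges (nonTwinGraph G) σ α) :
    ∃ e' ∈ kempeEdges G σ α, e' ≠ e ∧ ∀ β : G.Coloring C, IsFrozen β →
      colorPair σ β = colorPair σ α → (Recolors α β e' ↔ Recolors α β e) := by
  obtain ⟨u, v, x, rfl, hxv, hxu⟩ :=
    exists_eq_mk_of_mem_edgeSet_nonTwinGraph (mem_kempeEdges.1 he).1
  have he := kempeEdges_mono nonTwinGraph_le α he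
  obtain ⟨hadj, huv⟩ := (mk_mem_kempeEdges hσ).1 he
  obtain ⟨y, hyx, hyu⟩ := hα x (α u)
  have hvx : v ∈ closedNeighborSet G x := mem_closedNeighborSet_comm.1 hxv
  have hyne_u : y ≠ u := by
    rintro rfl
    exact hxu (mem_closedNeighborSet_comm.1 hyx)
  have hyne_v : y ≠ v := by
    rintro rfl
    exact α.valid hadj hyu.symm
  have hy_paired : σ (α y) ≠ α y := by
    rw [hyu, ← huv]
    exact (α.valid hadj).symm
  obtain ⟨z, hyz⟩ := hα.exists_mk_mem_kempeEdges hσ hy_paired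
  obtain ⟨hyz_adj, hz⟩ := (mk_mem_kempeEdges hσ).1 hyz
  refine ⟨s(y, z), hyz, fun h ↦ ?_, fun β hβ hβα ↦ ?_⟩
  · have : y ∈ s(u, v) := h ▸ Sym2.mem_mk_left y z
    exact (Sym2.mem_iff.1 this).elim hyne_u hyne_v
  · have hβyv : β y ≠ β v := fun h ↦ hyne_v (hβ.injOn (hdeg x) hyx hvx h)
    rw [recolors_mk_iff hσ hβα hz (β.valid hyz_adj), recolors_mk_iff hσ hβα huv (β.valid hadj),
      not_iff_not, eq_iff_eq_of_colorPair_eq hσ hβα (hyu ▸ huv) hβyv,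
      eq_iff_eq_of_colorPair_eq hσ hβα huv (β.valid hadj)]

open Classical in
theorem IsFrozen.two_rpow_mul_card_le (hσ : Function.Involutive σ) (hα : IsFrozen α)
    (hdeg : ∀ v, G.degree v < Fintype.card C) :
    (2 : ℝ) ^ (#(kempeEdges (nonTwinGraph G) σ α) / 2 : ℝ) *
      #{β : G.Coloring C | IsFrozen β ∧ colorPair σ β = colorPair σ α} ≤
      #{β : G.Coloring C | colorPair σ β = colorPair σ α} := by
  refine (two_rpow_half_card_mul_card_le (fun β : G.Coloring C ↦ Recolors α β)
    (kempeEdges_mono nonTwinGraph_le α) ((hα.injOn_recolors hσ).mono ?_) fun e he ↦ ?_).trans ?_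
  · intro β hβ
    exact ((mem_filter_univ _).1 hβ).2
  · obtain ⟨e', he', hne, hiff⟩ := hα.exists_recolors_iff hσ hdeg he
    exact ⟨e', he', hne, fun β hβ ↦ ((mem_filter_univ _).1 hβ).elim (hiff β)⟩
  · exact_mod_cast hα.two_pow_card_kempeEdges_le hσ hdeg

open Classical in
theorem sum_two_rpow_card_kempeEdges_le (hσ : Function.Involutive σ)
    (hdeg : ∀ v, G.degree v < Fintype.card C) :
    ∑ α : G.Coloring C with IsFrozen α,
      (2 : ℝ) ^ (#(kempeEdges (nonTwinGraph G) σ α) / 2 : ℝ) ≤ Fintype.card (G.Coloring C) := by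
  refine sum_le_card_of_forall_mul_card_fiber_le (fun α : G.Coloring C ↦ colorPair σ α) _
    fun α hα ↦ ?_
  rw [filter_filter]
  exact ((mem_filter_univ _).1 hα).two_rpow_mul_card_le hσ hdeg

end Bound

open Classical in
theorem sum_card_kempeEdges [Fintype C] [AddCommGroup C] (H : SimpleGraph V) (α : V → C) :
    ∑ c, #(kempeEdges H (c - ·) α) = #H.edgeFinset := by
  let colorSum : Sym2 V → C := Sym2.lift ⟨fun u v ↦ α u + α v, fun _ _ ↦ add_comm _ _⟩
  rw [card_eq_sum_card_fiberwise (f := colorSum) (t := univ) fun _ _ ↦ by simp]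
  refine sum_congr rfl fun c _ ↦ congrArg card ?_
  ext e
  induction e with | _ u v
  rw [mk_mem_kempeEdges (sub_sub_cancel c), mem_filter, SimpleGraph.mem_edgeFinset,
    SimpleGraph.mem_edgeSet, eq_sub_iff_add_eq']
  rfl

end Kempe

section Average

variable [Fintype V] [Fintype C] [DecidableRel G.Adj] [AddCommGroup C]

theorem IsFrozen.card_mul_two_rpow_le_sum {α : G.Coloring C} (hα : IsFrozen α)
    (hdeg : ∀ v, G.degree v < Fintype.card C) (hG : G.CliqueFree (Fintype.card C)) :
    Fintype.card C * (2 : ℝ) ^ (Fintype.card V / (2 * Fintype.card C) : ℝ) ≤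
      ∑ c, (2 : ℝ) ^ (#(kempeEdges (nonTwinGraph G) (c - ·) α) / 2 : ℝ) := by
  classical
  have hsum : (Fintype.card V : ℝ) ≤ ∑ c, (#(kempeEdges (nonTwinGraph G) (c - ·) α) : ℝ) := by
    exact_mod_cast (hα.card_le_card_edgeFinset_nonTwinGraph hdeg hG).trans_eq
      (sum_card_kempeEdges _ α).symm
  refine le_trans ?_ (card_mul_rpow_sum_div_card_le_sum_rpow two_pos _)
  rw [← sum_div, div_div]
  gcongr
  exact one_le_two

open Classical in
theorem two_rpow_mul_card_frozen_le (hdeg : ∀ v, G.degree v < Fintype.card C)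
    (hG : G.CliqueFree (Fintype.card C)) :
    (2 : ℝ) ^ (Fintype.card V / (2 * Fintype.card C) : ℝ) * #{α : G.Coloring C | IsFrozen α} ≤
      Fintype.card (G.Coloring C) := by
  refine le_of_mul_le_mul_left ?_ (Nat.cast_pos.2 (Fintype.card_pos (α := C)))
  calc Fintype.card C * ((2 : ℝ) ^ (Fintype.card V / (2 * Fintype.card C) : ℝ) *
        #{α : G.Coloring C | IsFrozen α})
      = ∑ α : G.Coloring C with IsFrozen α,
          Fintype.card C * (2 : ℝ) ^ (Fintype.card V / (2 * Fintype.card C) : ℝ) := by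
        rw [sum_const, nsmul_eq_mul]
        ring
    _ ≤ ∑ α : G.Coloring C with IsFrozen α,
          ∑ c, (2 : ℝ) ^ (#(kempeEdges (nonTwinGraph G) (c - ·) α) / 2 : ℝ) :=
        sum_le_sum fun α hα ↦ ((mem_filter_univ _).1 hα).card_mul_two_rpow_le_sum hdeg hG
    _ = ∑ c, ∑ α : G.Coloring C with IsFrozen α,
          (2 : ℝ) ^ (#(kempeEdges (nonTwinGraph G) (c - ·) α) / 2 : ℝ) := sum_comm
    _ ≤ ∑ _c : C, (Fintype.card (G.Coloring C) : ℝ) :=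
        sum_le_sum fun c _ ↦ sum_two_rpow_card_kempeEdges_le (sub_sub_cancel c) hdeg
    _ = Fintype.card C * Fintype.card (G.Coloring C) := by simp

end Average

end Colorings

section Connected

variable {V : Type*} [Fintype V] {G : SimpleGraph V} [DecidableRel G.Adj]

theorem cliqueFree_of_connected_of_degree_le {Δ : ℕ} (hG : G.Connected)
    (hdeg : ∀ v, G.degree v ≤ Δ) (hcard : Δ + 1 < Fintype.card V) : G.CliqueFree (Δ + 1) := by
  classical
  intro s hs
  obtain ⟨u, hu⟩ : s.Nonempty := card_pos.1 (by rw [hs.card_eq]; lia)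
  obtain ⟨v, hv⟩ : ∃ v, v ∉ s := by
    by_contra! hall
    rw [← hs.card_eq, eq_univ_iff_forall.2 hall] at hcard
    exact hcard.ne rfl
  obtain ⟨p⟩ := hG.preconnected u v
  obtain ⟨⟨⟨x, y⟩, hxy⟩, -, hx, hy⟩ := p.exists_boundary_dart s hu hv
  have hsub : insert y (s.erase x) ⊆ G.neighborFinset x := by
    intro z hz
    rw [G.mem_neighborFinset]
    rcases mem_insert.1 hz with rfl | hz
    · exact hxy
    · exact hs.isClique hx (mem_of_mem_erase hz) (ne_of_mem_erase hz).symm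
  have hle := card_le_card hsub
  rw [card_insert_of_notMem fun h ↦ hy (mem_of_mem_erase h), card_erase_of_mem hx, hs.card_eq,
    G.card_neighborFinset_eq_degree] at hle
  exact absurd (hdeg x) (by lia)

end Connected

/-- Proper colour assignments as graph homomorphisms to the complete graph on the colours. -/
def coloringEquiv {V C : Type*} (G : SimpleGraph V) :
    {α : V → C // ∀ u v, G.Adj u v → α u ≠ α v} ≃ G.Coloring C where
  toFun α := .mk α.1 (α.2 _ _)
  invFun α := ⟨α, fun _ _ h ↦ α.valid h⟩

theorem card_subtype_frozen {V C : Type*} (G : SimpleGraph V) :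
    Nat.card {α : V → C // (∀ u v, G.Adj u v → α u ≠ α v) ∧
      ∀ v c, ∃ u, (u = v ∨ G.Adj v u) ∧ α u = c} = Nat.card {α : G.Coloring C // IsFrozen α} :=
  Nat.card_congr <| (Equiv.subtypeSubtypeEquivSubtypeInter _ _).symm.trans <|
    (coloringEquiv G).subtypeEquiv fun _ ↦ Iff.rfl

theorem inv_sqrt_two_rpow_div_le (m n : ℕ) :
    (√2)⁻¹ ^ (m / n : ℝ) ≤ ((6 : ℝ) / 7) ^ (m / n) := by
  have hsqrt : 1 ≤ √2 := Real.one_le_sqrt.2 one_le_two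
  have hinv : (√2)⁻¹ ≤ 6 / 7 := by
    rw [inv_le_comm₀ (by positivity) (by norm_num)]
    exact Real.le_sqrt_of_sq_le (by norm_num)
  calc (√2)⁻¹ ^ (m / n : ℝ) ≤ (√2)⁻¹ ^ ((m / n : ℕ) : ℝ) :=
        Real.rpow_le_rpow_of_exponent_ge (by positivity) (inv_le_one_of_one_le₀ hsqrt)
          Nat.cast_div_le
    _ = (√2)⁻¹ ^ (m / n) := Real.rpow_natCast _ _
    _ ≤ (6 / 7) ^ (m / n) := by gcongr

theorem stmt_19_general {V C : Type*} [Fintype V] [Fintype C] (G : SimpleGraph V)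
    [DecidableRel G.Adj] (hdeg : ∀ v, G.degree v < Fintype.card C)
    (hG : G.CliqueFree (Fintype.card C)) :
    (Nat.card {α : G.Coloring C // IsFrozen α} : ℝ) ≤
      (√2)⁻¹ ^ (Fintype.card V / Fintype.card C : ℝ) * Nat.card (G.Coloring C) := by
  classical
  have : NeZero (Fintype.card C) := ⟨fun h ↦ hG ∅ ⟨by simp, by simp [h]⟩⟩
  let : AddCommGroup C := (Fintype.equivFin C).addCommGroup
  rw [Nat.card_eq_fintype_card, Nat.card_eq_fintype_card, Fintype.card_subtype,
    Real.inv_rpow (by positivity), ← div_eq_inv_mul, le_div_iff₀' (by positivity),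
    Real.sqrt_eq_rpow, ← Real.rpow_mul zero_le_two, div_mul_div_comm, one_mul]
  exact two_rpow_mul_card_frozen_le hdeg hG

/-- Let `G` be a connected `Δ`-regular graph on `n ≥ Δ+2` vertices
with `Δ ≥ 3` admitting a frozen `(Δ+1)`-colouring. Then the proportion of frozen
colourings among all proper `(Δ+1)`-colourings of `G` is at most
`(6/7)^{n/(Δ+1)}`. -/
theorem stmt_19 {V : Type*} [Fintype V] [DecidableEq V] (G : SimpleGraph V)
    [DecidableRel G.Adj] (Δ : ℕ) (hΔ : 3 ≤ Δ)
    (hn : Δ + 2 ≤ Fintype.card V)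
    (hreg : ∀ v, G.degree v = Δ) (hconn : G.Connected)
    (hfrozen : ∃ α : V → Fin (Δ + 1), (∀ u v, G.Adj u v → α u ≠ α v) ∧
        (∀ v c, ∃ u, (u = v ∨ G.Adj v u) ∧ α u = c)) :
    (Nat.card {α : V → Fin (Δ + 1) //
        (∀ u v, G.Adj u v → α u ≠ α v) ∧
        (∀ v c, ∃ u, (u = v ∨ G.Adj v u) ∧ α u = c)} : ℝ) ≤
      ((6 : ℝ) / 7) ^ (Fintype.card V / (Δ + 1)) *
        (Nat.card {α : V → Fin (Δ + 1) // ∀ u v, G.Adj u v → α u ≠ α v} : ℝ) := by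
  rw [card_subtype_frozen, Nat.card_congr (coloringEquiv G)]
  have hfree : G.CliqueFree (Δ + 1) :=
    cliqueFree_of_connected_of_degree_le hconn (fun v ↦ (hreg v).le) hn
  have hdeg v : G.degree v < Fintype.card (Fin (Δ + 1)) := by simp [hreg v]
  refine (stmt_19_general G hdeg (by rwa [Fintype.card_fin])).trans ?_
  rw [Fintype.card_fin]
  gcongr
  exact inv_sqrt_two_rpow_div_le _ _
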